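/- Let ε ∈ {1, −1} and δ(x, y) = x² + ε·y² (an A₁-type singular impasse curve). Let X = (P, Q) be real-analytic on a neighborhood of the origin in ℝ² with P(0,0) ≠ 0, P(0,0) ≠ Q(0,0) and P(0,0) ≠ −Q(0,0). Then the constrained system (X, δ) is orientation-preserving C⁰-orbitally equivalent at (0, 0) to the constrained system (Y, δ), where Y is the constant vector field Y ≡ (P(0,0), Q(0,0)). -/

import Mathlib

/-- A phase curve of the vector field `X` in the set `V`: a differentiable curve
`c : J → V` on a nondegenerate interval `J` with `c'(t) = X(c(t))` for all `t ∈ J`. -/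
def IsPhaseCurve (X : ℝ × ℝ → ℝ × ℝ) (V : Set (ℝ × ℝ)) (J : Set ℝ) (c : ℝ → ℝ × ℝ) : Prop :=
  J.OrdConnected ∧ J.Nontrivial ∧ (∀ t ∈ J, c t ∈ V) ∧
    ∀ t ∈ J, HasDerivWithinAt c (X (c t)) J t

/-- The planar constrained systems `(X, δ)` and `(Y, γ)` are orientation-preserving
`C⁰`-orbitally equivalent at `(p₁, p₂)`: there are open neighborhoods `V₁ ∋ p₁`, `V₂ ∋ p₂`
and a homeomorphism `Φ : V₁ → V₂` sending `p₁` to `p₂` and impasse set to impasse set, which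
carries phase curves of `X` off the impasse set onto phase curves of `Y` off the impasse set
up to continuous strictly increasing reparametrizations, and conversely for `Φ⁻¹`. -/
def OrbitallyEquivAt (X : ℝ × ℝ → ℝ × ℝ) (δ : ℝ × ℝ → ℝ) (p₁ : ℝ × ℝ)
    (Y : ℝ × ℝ → ℝ × ℝ) (γ : ℝ × ℝ → ℝ) (p₂ : ℝ × ℝ) : Prop :=
  ∃ (V₁ V₂ : Set (ℝ × ℝ)) (Φ Φinv : ℝ × ℝ → ℝ × ℝ),
    IsOpen V₁ ∧ IsOpen V₂ ∧ p₁ ∈ V₁ ∧ p₂ ∈ V₂ ∧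
    -- Φ is a homeomorphism from V₁ onto V₂ with inverse Φinv
    ContinuousOn Φ V₁ ∧ ContinuousOn Φinv V₂ ∧
    Set.MapsTo Φ V₁ V₂ ∧ Set.MapsTo Φinv V₂ V₁ ∧
    (∀ z ∈ V₁, Φinv (Φ z) = z) ∧ (∀ z ∈ V₂, Φ (Φinv z) = z) ∧
    Φ p₁ = p₂ ∧
    -- Φ maps the impasse set to the impasse set
    Φ '' ({z | δ z = 0} ∩ V₁) = {z | γ z = 0} ∩ V₂ ∧
    -- Φ maps phase curves of X to phase curves of Y, preserving orientation
    (∀ (J : Set ℝ) (c : ℝ → ℝ × ℝ),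
      IsPhaseCurve X (V₁ \ {z | δ z = 0}) J c →
      ∃ (J' : Set ℝ) (d : ℝ → ℝ × ℝ) (τ : ℝ → ℝ),
        IsPhaseCurve Y (V₂ \ {z | γ z = 0}) J' d ∧
        ContinuousOn τ J ∧ StrictMonoOn τ J ∧ τ '' J = J' ∧
        ∀ t ∈ J, Φ (c t) = d (τ t)) ∧
    -- Φ⁻¹ maps phase curves of Y to phase curves of X, preserving orientation
    (∀ (J : Set ℝ) (d : ℝ → ℝ × ℝ),
      IsPhaseCurve Y (V₂ \ {z | γ z = 0}) J d →
      ∃ (J' : Set ℝ) (c : ℝ → ℝ × ℝ) (τ : ℝ → ℝ),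
        IsPhaseCurve X (V₁ \ {z | δ z = 0}) J' c ∧
        ContinuousOn τ J ∧ StrictMonoOn τ J ∧ τ '' J = J' ∧
        ∀ t ∈ J, Φinv (d t) = c (τ t))

/-!
Put `v = X 0`. Since `δ v ≠ 0`, there are linear coordinates `w = A⁻¹ z` with `A (1, 0) = v` in
which the impasse set `{δ = 0}` is a point, a line or a pair of lines, more precisely a union of
strata of the arrangement of the two lines `w₁ = 0` and `w₁ + w₂ = 0`, both transverse to the
direction `(1, 0)` of the constant field.

Let `F (t, α)` be the position at time `t` of the orbit of `X` issued from `A (0, α)`. It is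
strictly differentiable at `0` with derivative `A`, hence a flow box of `X`; the constant field
`v` has the flow box `A`. The homeomorphism `A ∘ F⁻¹` would match the orbits but not the impasse
sets, so a map sliding points along the horizontal lines is inserted: with `u = A⁻¹ (F (t, α))`,
set `Θ (t, α) = (u₁ + u₂ - α, α)`. Along each horizontal `Θ` is increasing and its first component
vanishes exactly where `u₁` does, namely at `t = 0`, while `w₁ + w₂` takes the same value at
`Θ (t, α)` and at `u`. Hence `A ∘ Θ ∘ F⁻¹` maps orbits to orbits increasingly and preserves every
stratum, so also the impasse set.
-/

open Set Filter Topology Metric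
open scoped NNReal

section FlowDerivative

variable {E : Type*} [NormedAddCommGroup E] [NormedSpace ℝ E]

theorem norm_sub_sub_smul_le_of_hasDerivWithinAt {f f' : ℝ → E} {v : E} {C : ℝ} {s : Set ℝ}
    (hs : Convex ℝ s) (hf : ∀ t ∈ s, HasDerivWithinAt f (f' t) s t)
    (bound : ∀ t ∈ s, ‖f' t - v‖ ≤ C) {a b : ℝ} (ha : a ∈ s) (hb : b ∈ s) :
    ‖f b - f a - (b - a) • v‖ ≤ C * ‖b - a‖ := by
  have hderiv : ∀ t ∈ s, HasDerivWithinAt (fun t ↦ f t - t • v) (f' t - v) s t := fun t ht ↦ by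
    simpa only [one_smul] using
      (hf t ht).fun_sub ((hasDerivAt_id' t).smul_const v).hasDerivWithinAt
  convert hs.norm_image_sub_le_of_norm_hasDerivWithin_le hderiv bound ha hb using 2
  module

theorem norm_sub_sub_add_smul_le_of_hasDerivAt {a b a' b' : ℝ → E} {v : E} {C D : ℝ} {s : Set ℝ}
    (hs : Convex ℝ s) (ha : ∀ t ∈ s, HasDerivAt a (a' t) t) (hb : ∀ t ∈ s, HasDerivAt b (b' t) t)
    (ha' : ∀ t ∈ s, ‖a' t - v‖ ≤ C) (hab : ∀ t ∈ s, ‖a' t - b' t‖ ≤ D)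
    {t₀ t t' : ℝ} (ht₀ : t₀ ∈ s) (ht : t ∈ s) (ht' : t' ∈ s) :
    ‖a t - b t' - (a t₀ - b t₀ + (t - t') • v)‖ ≤ C * ‖t - t'‖ + D * ‖t' - t₀‖ := by
  have same_curve : ‖a t - a t' - (t - t') • v‖ ≤ C * ‖t - t'‖ :=
    norm_sub_sub_smul_le_of_hasDerivWithinAt hs (fun r hr ↦ (ha r hr).hasDerivWithinAt) ha' ht' ht
  have same_time : ‖(a t' - b t') - (a t₀ - b t₀)‖ ≤ D * ‖t' - t₀‖ :=
    hs.norm_image_sub_le_of_norm_hasDerivWithin_le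
      (fun r hr ↦ ((ha r hr).fun_sub (hb r hr)).hasDerivWithinAt) hab ht₀ ht'
  calc ‖a t - b t' - (a t₀ - b t₀ + (t - t') • v)‖
      = ‖a t - a t' - (t - t') • v + (a t' - b t' - (a t₀ - b t₀))‖ := by congr 1; abel
    _ ≤ C * ‖t - t'‖ + D * ‖t' - t₀‖ := norm_add_le_of_le same_curve same_time

theorem hasStrictFDerivAt_of_hasDerivAt_snd {f g : E × ℝ → E} {x₀ : E} {K : ℝ}
    (hf₀ : ∀ᶠ x in 𝓝 x₀, f (x, 0) = x)
    (hf : ∀ᶠ w in 𝓝 (x₀, 0), HasDerivAt (fun t ↦ f (w.1, t)) (g w) w.2)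
    (hg : ContinuousAt g (x₀, 0))
    (hgK : ∀ᶠ p : (E × E) × ℝ in 𝓝 ((x₀, x₀), 0),
      ‖g (p.1.1, p.2) - g (p.1.2, p.2)‖ ≤ K * ‖p.1.1 - p.1.2‖) :
    HasStrictFDerivAt f (.fst ℝ E ℝ + (ContinuousLinearMap.snd ℝ E ℝ).smulRight (g (x₀, 0)))
      (x₀, 0) := by
  refine .of_isLittleO (Asymptotics.isLittleO_iff.2 fun c hc ↦ ?_)
  have hgv : ∀ᶠ w in 𝓝 (x₀, (0 : ℝ)), ‖g w - g (x₀, 0)‖ ≤ c / 2 := by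
    simpa [dist_eq_norm] using hg.eventually (closedBall_mem_nhds (g (x₀, 0)) (half_pos hc))
  have hKt : ∀ᶠ t : ℝ in 𝓝 0, K * ‖t‖ ≤ c / 2 :=
    (Continuous.tendsto' (by fun_prop) 0 0 (by simp)).eventually_le_const (half_pos hc)
  have hproj : Tendsto (fun p : (E × E) × ℝ ↦ (p.1.1, p.2)) (𝓝 ((x₀, x₀), 0)) (𝓝 (x₀, 0)) :=
    Continuous.tendsto' (by fun_prop) _ _ rfl
  obtain ⟨r, hr, hnear⟩ := eventually_nhds_iff_ball.1 <| (hproj.eventually <|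
    ((hf₀.prod_inl_nhds 0).and (hKt.prod_inr_nhds x₀)).and (hf.and hgv)).and hgK
  simp only [← ball_prod_same, mem_prod, and_imp, Prod.forall] at hnear
  filter_upwards [ball_mem_nhds ((x₀, (0 : ℝ)), (x₀, (0 : ℝ))) hr]
  rintro ⟨⟨x, t⟩, x', t'⟩ hp
  simp only [← ball_prod_same, mem_prod] at hp
  obtain ⟨⟨hx, ht⟩, hx', ht'⟩ := hp
  have hx₀ := (hnear x x 0 hx hx (mem_ball_self hr)).1.1.1
  have hx₀' := (hnear x' x 0 hx' hx (mem_ball_self hr)).1.1.1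
  have hKt' := (hnear x x t' hx hx ht').1.1.2
  have hvar := norm_sub_sub_add_smul_le_of_hasDerivAt (convex_ball (0 : ℝ) r)
    (fun s hs ↦ (hnear x x s hx hx hs).1.2.1) (fun s hs ↦ (hnear x' x s hx' hx hs).1.2.1)
    (fun s hs ↦ (hnear x x s hx hx hs).1.2.2) (fun s hs ↦ (hnear x x' s hx hx' hs).2)
    (mem_ball_self hr) ht ht'
  simp only [hx₀, hx₀', sub_zero] at hvar
  calc ‖f (x, t) - f (x', t') - (x - x' + (t - t') • g (x₀, 0))‖
      ≤ c / 2 * ‖t - t'‖ + K * ‖x - x'‖ * ‖t'‖ := hvar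
    _ = c / 2 * ‖t - t'‖ + K * ‖t'‖ * ‖x - x'‖ := by ring
    _ ≤ c / 2 * ‖(x - x', t - t')‖ + c / 2 * ‖(x - x', t - t')‖ := by
        gcongr
        exacts [le_max_right _ _, le_max_left _ _]
    _ = c * ‖(x - x', t - t')‖ := by ring

theorem exists_localFlow_lipschitz [CompleteSpace E] {X : E → E} {x₀ : E}
    (hX : ContDiffAt ℝ 1 X x₀) :
    ∃ (φ : E × ℝ → E) (L : ℝ), ContinuousAt φ (x₀, 0) ∧ (∀ᶠ x in 𝓝 x₀, φ (x, 0) = x) ∧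
      (∀ᶠ w in 𝓝 (x₀, 0), HasDerivAt (fun t ↦ φ (w.1, t)) (X (φ w)) w.2) ∧
      ∀ᶠ p : (E × E) × ℝ in 𝓝 ((x₀, x₀), 0),
        ‖φ (p.1.1, p.2) - φ (p.1.2, p.2)‖ ≤ L * ‖p.1.1 - p.1.2‖ := by
  obtain ⟨ε, hε, a, r, _, _, hr, hPL⟩ := IsPicardLindelof.of_contDiffAt_one hX
  obtain ⟨α, hα, L, hL⟩ :=
    (hPL 0).exists_forall_mem_closedBall_eq_hasDerivWithinAt_lipschitzOnWith
  have hball : closedBall x₀ r ∈ 𝓝 x₀ := closedBall_mem_nhds x₀ hr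
  have htime : Icc (0 - ε) (0 + ε) ∈ 𝓝 (0 : ℝ) := Icc_mem_nhds (by simpa) (by simpa)
  refine ⟨fun w ↦ α w.1 w.2, L, ?_, ?_, ?_, ?_⟩
  · exact (continuousOn_prod_of_continuousOn_lipschitzOnWith _ L
      (fun x hx t ht ↦ ((hα x hx).2 t ht).continuousWithinAt) hL).continuousAt
      (prod_mem_nhds hball htime)
  · filter_upwards [hball] with x hx using (hα x hx).1
  · filter_upwards [prod_mem_nhds hball (eventually_mem_nhds_iff.2 htime)] with w hw
    exact ((hα w.1 hw.1).2 w.2 (mem_of_mem_nhds hw.2)).hasDerivAt hw.2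
  · filter_upwards [prod_mem_nhds (prod_mem_nhds hball hball) htime] with p hp
    exact (hL p.2 hp.2).norm_sub_le hp.1.1 hp.1.2

theorem exists_localFlow_hasStrictFDerivAt [CompleteSpace E] {X : E → E} {x₀ : E}
    (hX : ContDiffAt ℝ 1 X x₀) :
    ∃ φ : E × ℝ → E,
      HasStrictFDerivAt φ (.fst ℝ E ℝ + (ContinuousLinearMap.snd ℝ E ℝ).smulRight (X x₀))
        (x₀, 0) ∧
      (∀ᶠ x in 𝓝 x₀, φ (x, 0) = x) ∧
      ∀ᶠ w in 𝓝 (x₀, 0), HasDerivAt (fun t ↦ φ (w.1, t)) (X (φ w)) w.2 := by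
  obtain ⟨φ, L, hcont, hinit, hderiv, hlip⟩ := exists_localFlow_lipschitz hX
  obtain ⟨K, s, hs, hK⟩ := hX.exists_lipschitzOnWith
  have hφ₀ : φ (x₀, 0) = x₀ := hinit.self_of_nhds
  have hφs (π : E × E → E) (hπ : Continuous π) (hπ₀ : π (x₀, x₀) = x₀) :
      ∀ᶠ p : (E × E) × ℝ in 𝓝 ((x₀, x₀), 0), φ (π p.1, p.2) ∈ s := by
    have hπφ : Tendsto (fun p : (E × E) × ℝ ↦ (π p.1, p.2)) (𝓝 ((x₀, x₀), 0)) (𝓝 (x₀, 0)) :=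
      Continuous.tendsto' (by fun_prop) _ _ (by simp [hπ₀])
    exact (hcont.tendsto.comp hπφ).eventually_mem (by simpa only [hφ₀])
  have hXφ : ∀ᶠ p : (E × E) × ℝ in 𝓝 ((x₀, x₀), 0),
      ‖X (φ (p.1.1, p.2)) - X (φ (p.1.2, p.2))‖ ≤ K * L * ‖p.1.1 - p.1.2‖ := by
    filter_upwards [hlip, hφs _ continuous_fst rfl, hφs _ continuous_snd rfl] with p hp h₁ h₂
    calc ‖X (φ (p.1.1, p.2)) - X (φ (p.1.2, p.2))‖
        ≤ K * ‖φ (p.1.1, p.2) - φ (p.1.2, p.2)‖ := hK.norm_sub_le h₁ h₂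
      _ ≤ K * (L * ‖p.1.1 - p.1.2‖) := by gcongr
      _ = K * L * ‖p.1.1 - p.1.2‖ := by ring
  have hXcont : ContinuousAt (X ∘ φ) (x₀, 0) :=
    ContinuousAt.comp (by simpa only [hφ₀] using hX.continuousAt) hcont
  have hstrict := hasStrictFDerivAt_of_hasDerivAt_snd hinit hderiv hXcont hXφ
  exact ⟨φ, by simpa only [Function.comp_apply, hφ₀] using hstrict, hinit, hderiv⟩

theorem exists_flowCoordinates [CompleteSpace E] {G : Type*} [NormedAddCommGroup G]
    [NormedSpace ℝ G] {X : E → E} {x₀ : E} (hX : ContDiffAt ℝ 1 X x₀) {A : ℝ × G →L[ℝ] E}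
    (hA : A (1, 0) = X x₀) :
    ∃ F : ℝ × G → E, HasStrictFDerivAt F A 0 ∧
      (∀ᶠ w : ℝ × G in 𝓝 0, F (0, w.2) = x₀ + A (0, w.2)) ∧
      ∀ᶠ w : ℝ × G in 𝓝 0, HasDerivAt (fun t ↦ F (t, w.2)) (X (F w)) w.1 := by
  obtain ⟨φ, hφ, hinit, hderiv⟩ := exists_localFlow_hasStrictFDerivAt hX
  let A₂ : ℝ × G →L[ℝ] E := A.comp ((ContinuousLinearMap.inr ℝ ℝ G).comp (.snd ℝ ℝ G))
  let ι : ℝ × G → E × ℝ := fun w ↦ (x₀ + A₂ w, w.1)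
  have hι₀ : ι 0 = (x₀, 0) := by simp [ι]
  have hι : HasStrictFDerivAt ι (A₂.prod (.fst ℝ ℝ G)) 0 :=
    (A₂.hasStrictFDerivAt.const_add x₀).prodMk hasStrictFDerivAt_fst
  have hιt : Tendsto ι (𝓝 0) (𝓝 (x₀, 0)) := hι₀ ▸ hι.continuousAt
  have hA_eq : A = (.fst ℝ E ℝ + (ContinuousLinearMap.snd ℝ E ℝ).smulRight (X x₀)).comp
      (A₂.prod (.fst ℝ ℝ G)) := by
    ext w <;> simp [A₂, hA, Prod.mk_zero_zero]
  refine ⟨φ ∘ ι, ?_, ?_, hιt.eventually hderiv⟩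
  · rw [hA_eq]
    exact (hι₀ ▸ hφ).comp 0 hι
  · exact ((continuous_fst.tendsto (x₀, (0 : ℝ))).comp hιt).eventually hinit

end FlowDerivative

section LipschitzInverse

variable {E F : Type*} [NormedAddCommGroup E] [NormedSpace ℝ E] [NormedAddCommGroup F]
  [NormedSpace ℝ F]

theorem hasDerivWithinAt_comp_of_lipschitzOnWith {ψ : E → F} {T : Set E} {K : ℝ≥0}
    (hψ : LipschitzOnWith K ψ T) {c e : ℝ → E} {J : Set ℝ} {t₀ : ℝ} {v : E} {v' : F}
    (hc : HasDerivWithinAt c v J t₀) (he : HasDerivWithinAt e v J t₀) (hce : c t₀ = e t₀)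
    (hcT : ∀ᶠ t in 𝓝[J] t₀, c t ∈ T) (heT : ∀ᶠ t in 𝓝[J] t₀, e t ∈ T)
    (hψe : HasDerivWithinAt (ψ ∘ e) v' J t₀) : HasDerivWithinAt (ψ ∘ c) v' J t₀ := by
  have hsmall : (fun t ↦ c t - e t) =o[𝓝[J] t₀] fun t ↦ t - t₀ := by
    simpa [hce] using hasDerivWithinAt_iff_isLittleO.1 (hc.fun_sub he)
  have hlip : (fun t ↦ ψ (c t) - ψ (e t)) =O[𝓝[J] t₀] fun t ↦ c t - e t :=
    .of_bound K (by filter_upwards [hcT, heT] with t h₁ h₂ using hψ.norm_sub_le h₁ h₂)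
  have hdiff : HasDerivWithinAt (fun t ↦ ψ (c t) - ψ (e t)) 0 J t₀ :=
    hasDerivWithinAt_iff_isLittleO.2 (by simpa [hce] using hlip.trans_isLittleO hsmall)
  simpa using (hψe.add hdiff).congr_of_eventuallyEq (.of_forall fun t ↦ by simp) (by simp)

theorem exists_openPartialHomeomorph_lipschitz_symm [CompleteSpace E] {f : E → F} {A : E ≃L[ℝ] F}
    {a : E} (hf : HasStrictFDerivAt f (A : E →L[ℝ] F) a) :
    ∃ U ∈ 𝓝 a, ∀ s ⊆ U, IsOpen s → ∃ g : OpenPartialHomeomorph E F, ⇑g = f ∧ g.source = s ∧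
      ∃ K, LipschitzOnWith K g.symm g.target := by
  let f₀ := hf.toOpenPartialHomeomorph f
  have ha : a ∈ f₀.source := hf.mem_toOpenPartialHomeomorph_source
  obtain ⟨K, T, hT, hK⟩ := hf.to_localInverse.exists_lipschitzOnWith
  refine ⟨f₀.source ∩ f ⁻¹' T, inter_mem (f₀.open_source.mem_nhds ha) (hf.continuousAt hT),
    fun s hs hs_open ↦ ⟨f₀.restrOpen s hs_open, rfl, ?_, K, hK.mono ?_⟩⟩
  · exact inter_eq_right.2 fun x hx ↦ (hs hx).1
  · intro y hy
    rw [← f₀.right_inv hy.1]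
    exact (hs hy.2).2

end LipschitzInverse

/-- `Φ` sends every phase curve of `X` in `U` to a phase curve of `Y` (here the integral curve `d`
on the interval `τ '' J`), up to a continuous increasing change of time `τ`. -/
def MapsPhaseCurves (Φ : ℝ × ℝ → ℝ × ℝ) (U : Set (ℝ × ℝ)) (X Y : ℝ × ℝ → ℝ × ℝ) : Prop :=
  ∀ ⦃J : Set ℝ⦄ ⦃c : ℝ → ℝ × ℝ⦄, IsPhaseCurve X U J c →
    ∃ (d : ℝ → ℝ × ℝ) (τ : ℝ → ℝ), ContinuousOn τ J ∧ StrictMonoOn τ J ∧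
      IsIntegralCurveOn d (fun _ ↦ Y) (τ '' J) ∧ ∀ t ∈ J, Φ (c t) = d (τ t)

theorem IsPhaseCurve.continuousOn {X : ℝ × ℝ → ℝ × ℝ} {V : Set (ℝ × ℝ)} {J : Set ℝ}
    {c : ℝ → ℝ × ℝ} (hc : IsPhaseCurve X V J c) : ContinuousOn c J :=
  fun t ht ↦ (hc.2.2.2 t ht).continuousWithinAt

namespace MapsPhaseCurves

variable {Φ Ψ : ℝ × ℝ → ℝ × ℝ} {U V : Set (ℝ × ℝ)} {X Y Z : ℝ × ℝ → ℝ × ℝ}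

theorem mono (h : MapsPhaseCurves Φ U X Y) (hVU : V ⊆ U) : MapsPhaseCurves Φ V X Y :=
  fun _ _ ⟨hJ, hJ', hc, hX⟩ ↦ h ⟨hJ, hJ', fun t ht ↦ hVU (hc t ht), hX⟩

theorem exists_isPhaseCurve (h : MapsPhaseCurves Φ U X Y) (hΦ : MapsTo Φ U V) {J : Set ℝ}
    {c : ℝ → ℝ × ℝ} (hc : IsPhaseCurve X U J c) :
    ∃ (J' : Set ℝ) (d : ℝ → ℝ × ℝ) (τ : ℝ → ℝ), IsPhaseCurve Y V J' d ∧ ContinuousOn τ J ∧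
      StrictMonoOn τ J ∧ τ '' J = J' ∧ ∀ t ∈ J, Φ (c t) = d (τ t) := by
  obtain ⟨d, τ, hτ, hτmono, hd, hΦd⟩ := h hc
  obtain ⟨hJ, hJ', hcU, -⟩ := hc
  refine ⟨τ '' J, d, τ, ⟨?_, hJ'.image_of_injOn hτmono.injOn, ?_, hd⟩, hτ, hτmono, rfl, hΦd⟩
  · exact (hJ.isPreconnected.image τ hτ).ordConnected
  · rintro _ ⟨t, ht, rfl⟩
    exact hΦd t ht ▸ hΦ (hcU t ht)

theorem comp (hΨ : MapsPhaseCurves Ψ V Y Z) (hΦ : MapsPhaseCurves Φ U X Y)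
    (hUV : MapsTo Φ U V) : MapsPhaseCurves (Ψ ∘ Φ) U X Z := by
  intro J c hc
  obtain ⟨_, d, τ, hd, hτ, hτmono, rfl, hΦd⟩ := hΦ.exists_isPhaseCurve hUV hc
  obtain ⟨e, σ, hσ, hσmono, he, hΨe⟩ := hΨ hd
  refine ⟨e, σ ∘ τ, hσ.comp hτ (mapsTo_image τ J), hσmono.comp hτmono (mapsTo_image τ J), ?_, ?_⟩
  · rwa [image_comp]
  · intro t ht
    rw [Function.comp_apply, hΦd t ht, hΨe _ (mem_image_of_mem τ ht), Function.comp_apply]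

theorem of_hasDerivWithinAt (h : ∀ ⦃J c⦄, IsPhaseCurve X U J c → ∀ t ∈ J,
    HasDerivWithinAt (Φ ∘ c) (Y (Φ (c t))) J t) : MapsPhaseCurves Φ U X Y :=
  fun J c hc ↦ ⟨Φ ∘ c, id, continuousOn_id, strictMonoOn_id, by rw [image_id]; exact h hc,
    fun _ _ ↦ rfl⟩

end MapsPhaseCurves

theorem OrbitallyEquivAt.of_openPartialHomeomorph {X Y : ℝ × ℝ → ℝ × ℝ} {δ γ : ℝ × ℝ → ℝ}
    (e : OpenPartialHomeomorph (ℝ × ℝ) (ℝ × ℝ)) {p q : ℝ × ℝ} (hp : p ∈ e.source) (hpq : e p = q)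
    (himp : e.IsImage {z | δ z = 0} {z | γ z = 0}) (hXY : MapsPhaseCurves e e.source X Y)
    (hYX : MapsPhaseCurves e.symm e.target Y X) : OrbitallyEquivAt X δ p Y γ q := by
  have hreg := himp.compl
  refine ⟨e.source, e.target, e, e.symm, e.open_source, e.open_target, hp, hpq ▸ e.map_source hp,
    e.continuousOn, e.symm.continuousOn, e.mapsTo, e.symm.mapsTo, fun _ ↦ e.left_inv,
    fun _ ↦ e.right_inv, hpq, ?_, fun _ _ ↦ ?_, fun _ _ ↦ ?_⟩
  · rw [inter_comm, himp.image_eq, inter_comm]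
  · exact (hXY.mono sdiff_subset).exists_isPhaseCurve hreg.mapsTo
  · exact (hYX.mono sdiff_subset).exists_isPhaseCurve hreg.symm.mapsTo

theorem IsPhaseCurve.eq_add_smul {v : ℝ × ℝ} {V : Set (ℝ × ℝ)} {J : Set ℝ} {c : ℝ → ℝ × ℝ}
    (hc : IsPhaseCurve (fun _ ↦ v) V J c) {s t : ℝ} (hs : s ∈ J) (ht : t ∈ J) :
    c t = c s + (t - s) • v := by
  obtain ⟨hJ, -, -, hderiv⟩ := hc
  have h := norm_sub_sub_smul_le_of_hasDerivWithinAt (v := v) (C := 0) hJ.convex hderiv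
    (by simp) hs ht
  rw [zero_mul, norm_le_zero_iff, sub_eq_zero] at h
  rw [← h, add_sub_cancel]

theorem MapsPhaseCurves.of_continuousLinearMap (A : ℝ × ℝ →L[ℝ] ℝ × ℝ) (U : Set (ℝ × ℝ))
    (v : ℝ × ℝ) : MapsPhaseCurves A U (fun _ ↦ v) (fun _ ↦ A v) :=
  .of_hasDerivWithinAt fun _ _ hc t ht ↦ A.hasFDerivAt.comp_hasDerivWithinAt t (hc.2.2.2 t ht)

/-- `g` is a flow box of `X`: the curves `t ↦ g (t, α)` are integral curves of `X`. The inverse is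
required to be Lipschitz, which replaces its differentiability away from the base point. -/
structure IsFlowBox (X : ℝ × ℝ → ℝ × ℝ) (g : OpenPartialHomeomorph (ℝ × ℝ) (ℝ × ℝ)) : Prop where
  hasDerivAt : ∀ w ∈ g.source, HasDerivAt (fun t ↦ g (t, w.2)) (X (g w)) w.1
  lipschitz_symm : ∃ K, LipschitzOnWith K g.symm g.target

namespace IsFlowBox

variable {X : ℝ × ℝ → ℝ × ℝ} {g : OpenPartialHomeomorph (ℝ × ℝ) (ℝ × ℝ)}

theorem mapsPhaseCurves (hg : IsFlowBox X g) :
    MapsPhaseCurves g g.source (fun _ ↦ (1, 0)) X := by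
  refine .of_hasDerivWithinAt fun J c hc t ht ↦ ?_
  have hcJ : ∀ s ∈ J, c s = ((c s).1, (c t).2) := fun s hs ↦
    Prod.ext rfl (by simp [hc.eq_add_smul ht hs])
  have hgc : EqOn (g ∘ c) ((fun r ↦ g (r, (c t).2)) ∘ fun s ↦ (c s).1) J := fun s hs ↦
    congrArg g (hcJ s hs)
  have hfst : HasDerivWithinAt (fun s ↦ (c s).1) 1 J t := (hc.2.2.2 t ht).fst
  simpa using ((hg.hasDerivAt _ (hc.2.2.1 t ht)).scomp_hasDerivWithinAt t hfst).congr hgc (hgc ht)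

theorem mapsPhaseCurves_symm (hg : IsFlowBox X g) :
    MapsPhaseCurves g.symm g.target X (fun _ ↦ (1, 0)) := by
  obtain ⟨K, hK⟩ := hg.lipschitz_symm
  refine .of_hasDerivWithinAt fun J c hc t₀ ht₀ ↦ ?_
  let w₀ : ℝ × ℝ := g.symm (c t₀)
  let ι : ℝ → ℝ × ℝ := fun t ↦ (t - t₀ + w₀.1, w₀.2)
  have hι₀ : ι t₀ = w₀ := by simp [ι]
  have hι_fst : HasDerivAt (fun t ↦ t - t₀ + w₀.1) 1 t₀ :=
    ((hasDerivAt_id' t₀).sub_const t₀).add_const w₀.1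
  have hι : HasDerivAt ι (1, 0) t₀ := hι_fst.prodMk (hasDerivAt_const t₀ w₀.2)
  have hgw₀ : g w₀ = c t₀ := g.right_inv (hc.2.2.1 t₀ ht₀)
  have hw₀ : w₀ ∈ g.source := g.map_target (hc.2.2.1 t₀ ht₀)
  have hsource : ∀ᶠ t in 𝓝 t₀, ι t ∈ g.source :=
    hι.continuousAt.eventually_mem (g.open_source.mem_nhds (hι₀ ▸ hw₀))
  have horbit : HasDerivAt (g ∘ ι) (X (c t₀)) t₀ := by
    have h := (hg.hasDerivAt w₀ hw₀).scomp_of_eq t₀ hι_fst (by simp)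
    rwa [one_smul, hgw₀] at h
  refine hasDerivWithinAt_comp_of_lipschitzOnWith hK (hc.2.2.2 t₀ ht₀) horbit.hasDerivWithinAt
    (by simp [hι₀, hgw₀]) (eventually_mem_nhdsWithin.mono hc.2.2.1)
    (nhdsWithin_le_nhds (hsource.mono fun t ht ↦ g.map_source ht)) ?_
  exact (hι.congr_of_eventuallyEq (hsource.mono fun t ht ↦ g.left_inv ht)).hasDerivWithinAt

end IsFlowBox

/-- `θ` slides points along the horizontal lines, in an increasing way. -/
structure IsFiberwiseIncreasing (θ : OpenPartialHomeomorph (ℝ × ℝ) (ℝ × ℝ)) : Prop where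
  snd_eq : ∀ w ∈ θ.source, (θ w).2 = w.2
  strictMonoOn : ∀ α, StrictMonoOn (fun t ↦ (θ (t, α)).1) {t | (t, α) ∈ θ.source}

namespace IsFiberwiseIncreasing

variable {θ : OpenPartialHomeomorph (ℝ × ℝ) (ℝ × ℝ)}

theorem symm (hθ : IsFiberwiseIncreasing θ) : IsFiberwiseIncreasing θ.symm := by
  have snd_eq : ∀ w ∈ θ.target, (θ.symm w).2 = w.2 := fun w hw ↦ by
    rw [← hθ.snd_eq _ (θ.map_target hw), θ.right_inv hw]
  have symm_eq (t α : ℝ) (h : (t, α) ∈ θ.target) : θ.symm (t, α) = ((θ.symm (t, α)).1, α) :=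
    Prod.ext rfl (snd_eq _ h)
  refine ⟨snd_eq, fun α t ht t' ht' htt' ↦ ?_⟩
  have hsource (s : ℝ) (hs : (s, α) ∈ θ.target) : ((θ.symm (s, α)).1, α) ∈ θ.source := by
    rw [← symm_eq s α hs]
    exact θ.map_target hs
  rw [← (hθ.strictMonoOn α).lt_iff_lt (hsource t ht) (hsource t' ht'), ← symm_eq t α ht,
    ← symm_eq t' α ht', θ.right_inv ht, θ.right_inv ht']
  exact htt'

theorem mapsPhaseCurves (hθ : IsFiberwiseIncreasing θ) :
    MapsPhaseCurves θ θ.source (fun _ ↦ (1, 0)) (fun _ ↦ (1, 0)) := by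
  intro J c hc
  obtain ⟨t₀, ht₀⟩ := hc.2.1.nonempty
  have hceq (t : ℝ) (ht : t ∈ J) : c t = ((c t₀).1 + (t - t₀), (c t₀).2) := by
    simpa [Prod.ext_iff] using hc.eq_add_smul ht₀ ht
  refine ⟨fun s ↦ (s, (c t₀).2), fun t ↦ (θ (c t)).1, ?_, fun t ht t' ht' htt' ↦ ?_, ?_, ?_⟩
  · exact continuous_fst.comp_continuousOn (θ.continuousOn.comp hc.continuousOn hc.2.2.1)
  · have hmem := hc.2.2.1 t ht
    have hmem' := hc.2.2.1 t' ht'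
    simp only
    rw [hceq t ht] at hmem ⊢
    rw [hceq t' ht'] at hmem' ⊢
    exact hθ.strictMonoOn _ hmem hmem' (by linarith)
  · exact fun s _ ↦ ((hasDerivAt_id' s).prodMk (hasDerivAt_const s _)).hasDerivWithinAt
  · exact fun t ht ↦ Prod.ext rfl (by rw [hθ.snd_eq _ (hc.2.2.1 t ht), hceq t ht])

end IsFiberwiseIncreasing

section Straightening

theorem strictMonoOn_fiber_of_hasDerivAt_pos {s : Set (ℝ × ℝ)} (hs : Convex ℝ s)
    {f f' : ℝ × ℝ → ℝ} (hf : ∀ w ∈ s, HasDerivAt (fun t ↦ f (t, w.2)) (f' w) w.1)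
    (hf' : ∀ w ∈ s, 0 < f' w) (α : ℝ) :
    StrictMonoOn (fun t ↦ f (t, α)) {t | (t, α) ∈ s} := by
  have hfiber : Convex ℝ {t : ℝ | (t, α) ∈ s} := fun t ht t' ht' a b ha hb hab ↦ by
    simpa [← add_mul, hab] using hs ht ht' ha hb hab
  have hinterior : ∀ t ∈ interior {t : ℝ | (t, α) ∈ s}, (t, α) ∈ s := fun t ht ↦
    interior_subset (s := {t : ℝ | (t, α) ∈ s}) ht
  exact strictMonoOn_of_hasDerivWithinAt_pos hfiber
    (fun t ht ↦ (hf _ ht).continuousAt.continuousWithinAt)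
    (fun t ht ↦ (hf _ (hinterior t ht)).hasDerivWithinAt) fun t ht ↦ hf' _ (hinterior t ht)

theorem eq_zero_iff_fst_eq_zero_of_hasDerivAt_pos {r : ℝ} {f f' : ℝ × ℝ → ℝ}
    (hf : ∀ w ∈ ball 0 r, HasDerivAt (fun t ↦ f (t, w.2)) (f' w) w.1)
    (hf' : ∀ w ∈ ball 0 r, 0 < f' w) (hf₀ : ∀ w ∈ ball (0 : ℝ × ℝ) r, f (0, w.2) = 0) {w : ℝ × ℝ}
    (hw : w ∈ ball 0 r) : f w = 0 ↔ w.1 = 0 := by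
  have h₀ : (0, w.2) ∈ ball (0 : ℝ × ℝ) r := by
    simp only [mem_ball_zero_iff] at hw ⊢
    exact (by simp [Prod.norm_def] : ‖((0 : ℝ), w.2)‖ ≤ ‖w‖).trans_lt hw
  rw [← (strictMonoOn_fiber_of_hasDerivAt_pos (convex_ball 0 r) hf hf' w.2).injOn.eq_iff hw h₀,
    hf₀ w hw]

variable {X F : ℝ × ℝ → ℝ × ℝ} (A : (ℝ × ℝ) ≃L[ℝ] ℝ × ℝ)

theorem exists_flowCoordinates_pos (hX : ContDiffAt ℝ 1 X 0) (hA : A (1, 0) = X 0) :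
    ∃ F : ℝ × ℝ → ℝ × ℝ, HasStrictFDerivAt F (A : ℝ × ℝ →L[ℝ] ℝ × ℝ) 0 ∧
      ∀ᶠ w in 𝓝 0, A.symm (F (0, w.2)) = (0, w.2) ∧
        HasDerivAt (fun t ↦ F (t, w.2)) (X (F w)) w.1 ∧ 0 < (A.symm (X (F w))).1 ∧
        0 < (A.symm (X (F w))).1 + (A.symm (X (F w))).2 := by
  obtain ⟨F, hF, hinit, hderiv⟩ := exists_flowCoordinates (A := (A : ℝ × ℝ →L[ℝ] ℝ × ℝ)) hX hA
  have hF₀ : F 0 = 0 := by simpa [Prod.mk_zero_zero] using hinit.self_of_nhds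
  have hcont : ContinuousAt (fun w ↦ A.symm (X (F w))) 0 :=
    A.symm.continuous.continuousAt.comp <|
      ContinuousAt.comp_of_eq hX.continuousAt hF.continuousAt hF₀
  have hvalue : A.symm (X (F 0)) = (1, 0) := by rw [hF₀, ← hA, A.symm_apply_apply]
  have hfst : ∀ᶠ w in 𝓝 0, 0 < (A.symm (X (F w))).1 :=
    continuousAt_const.eventually_lt hcont.fst (by simp [hvalue])
  have hsum : ∀ᶠ w in 𝓝 0, 0 < (A.symm (X (F w))).1 + (A.symm (X (F w))).2 :=
    continuousAt_const.eventually_lt (hcont.fst.add hcont.snd) (by simp [hvalue])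
  refine ⟨F, hF, ?_⟩
  filter_upwards [hinit, hderiv, hfst, hsum] with w hw hw' hpos hpos'
  exact ⟨by simp [hw], hw', hpos, hpos'⟩

/-- The shear that moves `w` along its horizontal line until its coordinate sum is that of
`A⁻¹ (F w)`. -/
def slide (F : ℝ × ℝ → ℝ × ℝ) (w : ℝ × ℝ) : ℝ × ℝ :=
  ((A.symm (F w)).1 + (A.symm (F w)).2 - w.2, w.2)

theorem hasStrictFDerivAt_slide (hF : HasStrictFDerivAt F (A : ℝ × ℝ →L[ℝ] ℝ × ℝ) 0) :
    HasStrictFDerivAt (slide A F) (ContinuousLinearEquiv.refl ℝ (ℝ × ℝ) : ℝ × ℝ →L[ℝ] ℝ × ℝ)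
      0 := by
  have hu := A.symm.hasStrictFDerivAt.comp 0 hF
  have h := ((hu.fst.add hu.snd).sub hasStrictFDerivAt_snd).prodMk
    (hasStrictFDerivAt_snd (p := (0 : ℝ × ℝ)))
  refine h.congr_fderiv ?_
  ext <;> simp

theorem hasDerivAt_slide_fst {w v : ℝ × ℝ} (hF : HasDerivAt (fun t ↦ F (t, w.2)) v w.1) :
    HasDerivAt (fun t ↦ (slide A F (t, w.2)).1) ((A.symm v).1 + (A.symm v).2) w.1 := by
  have hu : HasDerivAt (fun t ↦ A.symm (F (t, w.2))) (A.symm v) w.1 :=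
    A.symm.hasFDerivAt.comp_hasDerivAt w.1 hF
  have hu₁ : HasDerivAt (fun t ↦ (A.symm (F (t, w.2))).1) (A.symm v).1 w.1 := hu.fst
  have hu₂ : HasDerivAt (fun t ↦ (A.symm (F (t, w.2))).2) (A.symm v).2 w.1 := hu.snd
  exact (hu₁.add hu₂).sub_const w.2

theorem exists_isFlowBox_isFiberwiseIncreasing (hX : ContDiffAt ℝ 1 X 0)
    (hA : A (1, 0) = X 0) :
    ∃ g θ : OpenPartialHomeomorph (ℝ × ℝ) (ℝ × ℝ), IsFlowBox X g ∧ IsFiberwiseIncreasing θ ∧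
      g.source = θ.source ∧ 0 ∈ g.source ∧ g 0 = 0 ∧ θ 0 = 0 ∧
      ∀ w ∈ g.source, ((θ w).1 = 0 ↔ (A.symm (g w)).1 = 0) ∧
        (θ w).1 + (θ w).2 = (A.symm (g w)).1 + (A.symm (g w)).2 := by
  obtain ⟨F, hF, hev⟩ := exists_flowCoordinates_pos A hX hA
  obtain ⟨U, hU, hg⟩ := exists_openPartialHomeomorph_lipschitz_symm hF
  obtain ⟨W, hW, hθ⟩ := exists_openPartialHomeomorph_lipschitz_symm (hasStrictFDerivAt_slide A hF)
  obtain ⟨r, hr, hball⟩ := Metric.mem_nhds_iff.1 (inter_mem hev (inter_mem hU hW))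
  have h₀ : (0 : ℝ × ℝ) ∈ ball 0 r := mem_ball_self hr
  obtain ⟨g, rfl, hg_source, hlip⟩ := hg _ (fun w hw ↦ (hball hw).2.1) isOpen_ball
  obtain ⟨θ, hθ_eq, hθ_source, -⟩ := hθ _ (fun w hw ↦ (hball hw).2.2) isOpen_ball
  have hinit : ∀ w ∈ ball (0 : ℝ × ℝ) r, A.symm (g (0, w.2)) = (0, w.2) :=
    fun w hw ↦ (hball hw).1.1
  have hfst : ∀ w ∈ ball 0 r, HasDerivAt (fun t ↦ (A.symm (g (t, w.2))).1)
      (A.symm (X (g w))).1 w.1 := fun w hw ↦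
    (A.symm.hasFDerivAt.comp_hasDerivAt w.1 (hball hw).1.2.1).fst
  have hslide : ∀ w ∈ ball 0 r, HasDerivAt (fun t ↦ (θ (t, w.2)).1)
      ((A.symm (X (g w))).1 + (A.symm (X (g w))).2) w.1 := fun w hw ↦
    hθ_eq ▸ hasDerivAt_slide_fst A (hball hw).1.2.1
  have hg₀ : g 0 = 0 := A.symm.map_eq_zero_iff.1 (hinit 0 h₀)
  refine ⟨g, θ, ⟨fun w hw ↦ (hball (hg_source ▸ hw)).1.2.1, hlip⟩,
    ⟨fun w _ ↦ by rw [hθ_eq, slide], ?_⟩, hg_source.trans hθ_source.symm, hg_source ▸ h₀, hg₀,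
    by simp [hθ_eq, slide, hg₀], ?_⟩
  · rw [hθ_source]
    exact strictMonoOn_fiber_of_hasDerivAt_pos (f := fun w ↦ (θ w).1) (convex_ball 0 r) hslide
      fun w hw ↦ (hball hw).1.2.2.2
  · intro w hw
    rw [hg_source] at hw
    constructor
    · rw [eq_zero_iff_fst_eq_zero_of_hasDerivAt_pos (f := fun v ↦ (θ v).1) hslide
          (fun v hv ↦ (hball hv).1.2.2.2) (fun v hv ↦ by simp [hθ_eq, slide, hinit v hv]) hw,
        eq_zero_iff_fst_eq_zero_of_hasDerivAt_pos (f := fun v ↦ (A.symm (g v)).1) hfst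
          (fun v hv ↦ (hball hv).1.2.2.1) (fun v hv ↦ by rw [hinit v hv]) hw]
    · rw [hθ_eq, slide, sub_add_cancel]

end Straightening

/-- `Z` is a union of strata of the stratification of the plane cut out by the two lines `w₁ = 0`
and `w₁ + w₂ = 0`. -/
def IsUnionOfStrata (Z : Set (ℝ × ℝ)) : Prop :=
  ∀ w w' : ℝ × ℝ, (w.1 = 0 ↔ w'.1 = 0) → (w.1 + w.2 = 0 ↔ w'.1 + w'.2 = 0) → (w ∈ Z ↔ w' ∈ Z)

theorem orbitallyEquivAt_const_of_isUnionOfStrata {X : ℝ × ℝ → ℝ × ℝ} {δ : ℝ × ℝ → ℝ}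
    (hX : ContDiffAt ℝ 1 X 0) {A : (ℝ × ℝ) ≃L[ℝ] ℝ × ℝ} (hA : A (1, 0) = X 0)
    (hδ : IsUnionOfStrata {w | δ (A w) = 0}) : OrbitallyEquivAt X δ 0 (fun _ ↦ X 0) δ 0 := by
  obtain ⟨g, θ, hg, hθ, hsource, h₀, hg₀, hθ₀, hstrata⟩ :=
    exists_isFlowBox_isFiberwiseIncreasing A hX hA
  have hA_symm : A.symm (X 0) = (1, 0) := by rw [← hA, A.symm_apply_apply]
  let Φ : OpenPartialHomeomorph (ℝ × ℝ) (ℝ × ℝ) :=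
    (g.symm.trans' θ hsource).transHomeomorph A.toHomeomorph
  have hg_symm₀ : g.symm 0 = 0 := by rw [← hg₀, g.left_inv h₀, hg₀]
  refine .of_openPartialHomeomorph Φ (hg₀ ▸ g.map_source h₀)
    (show A (θ (g.symm 0)) = 0 by rw [hg_symm₀, hθ₀, map_zero]) (fun z hz ↦ ?_) ?_ ?_
  · have hw := g.map_target hz
    change δ (A (θ (g.symm z))) = 0 ↔ δ z = 0
    have h := hδ _ _ (hstrata _ hw).1 (by rw [(hstrata _ hw).2])
    simpa only [mem_ofPred_eq, A.apply_symm_apply, g.right_inv hz] using h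
  · change MapsPhaseCurves ((A ∘ θ) ∘ g.symm) g.target X fun _ ↦ X 0
    have hAθ := (MapsPhaseCurves.of_continuousLinearMap (A : ℝ × ℝ →L[ℝ] ℝ × ℝ) univ (1, 0)).comp
      hθ.mapsPhaseCurves (mapsTo_univ _ _)
    simp only [ContinuousLinearEquiv.coe_coe, hA, ← hsource] at hAθ
    exact hAθ.comp hg.mapsPhaseCurves_symm g.symm.mapsTo
  · change MapsPhaseCurves ((g ∘ θ.symm) ∘ A.symm) (A.symm ⁻¹' θ.target) (fun _ ↦ X 0) X
    have hA_inv := MapsPhaseCurves.of_continuousLinearMap (A.symm : ℝ × ℝ →L[ℝ] ℝ × ℝ)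
      (A.symm ⁻¹' θ.target) (X 0)
    simp only [ContinuousLinearEquiv.coe_coe, hA_symm] at hA_inv
    exact (hg.mapsPhaseCurves.comp hθ.symm.mapsPhaseCurves (hsource ▸ θ.symm.mapsTo)).comp
      hA_inv (mapsTo_preimage _ _)

theorem exists_continuousLinearEquiv_apply_eq_smul_add_smul {v b : ℝ × ℝ}
    (h : v.1 * b.2 - v.2 * b.1 ≠ 0) :
    ∃ A : (ℝ × ℝ) ≃L[ℝ] ℝ × ℝ, ∀ w, A w = w.1 • v + w.2 • b := by
  let f : ℝ × ℝ →ₗ[ℝ] ℝ × ℝ :=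
    (LinearMap.toSpanSingleton ℝ (ℝ × ℝ) v).coprod (LinearMap.toSpanSingleton ℝ (ℝ × ℝ) b)
  have hf : Function.Injective f := by
    refine (injective_iff_map_eq_zero f).2 fun w hw ↦ ?_
    obtain ⟨h₁, h₂⟩ : w.1 * v.1 + w.2 * b.1 = 0 ∧ w.1 * v.2 + w.2 * b.2 = 0 := by
      simpa [f, Prod.ext_iff] using hw
    have hw₁ : w.1 * (v.1 * b.2 - v.2 * b.1) = 0 := by linear_combination b.2 * h₁ - b.1 * h₂
    have hw₂ : w.2 * (v.1 * b.2 - v.2 * b.1) = 0 := by linear_combination v.1 * h₂ - v.2 * h₁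
    exact Prod.ext ((mul_eq_zero_iff_right h).1 hw₁) ((mul_eq_zero_iff_right h).1 hw₂)
  exact ⟨(LinearEquiv.ofInjectiveEndo f hf).toContinuousLinearEquiv, fun w ↦ by simp [f]⟩

theorem isUnionOfStrata_sq_add_mul_sq {ε : ℝ} (hε : 0 ≤ ε) :
    IsUnionOfStrata {w | w.1 ^ 2 + ε * w.2 ^ 2 = 0} := by
  intro w w' h₁ h₂
  have hzero (w : ℝ × ℝ) : w.1 ^ 2 + ε * w.2 ^ 2 = 0 ↔ w.1 = 0 ∧ (ε = 0 ∨ w.1 + w.2 = 0) := by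
    rw [add_eq_zero_iff_of_nonneg (by positivity) (by positivity)]
    simp +contextual
  simp only [mem_ofPred_eq, hzero, h₁, h₂]

theorem isUnionOfStrata_mul_add : IsUnionOfStrata {w | w.1 * (w.1 + w.2) = 0} := by
  intro w w' h₁ h₂
  simp only [mem_ofPred_eq, mul_eq_zero, h₁, h₂]

theorem exists_isUnionOfStrata_sq_add_mul_sq {ε : ℝ} {v : ℝ × ℝ}
    (hv : v.1 ^ 2 + ε * v.2 ^ 2 ≠ 0) :
    ∃ A : (ℝ × ℝ) ≃L[ℝ] ℝ × ℝ, A (1, 0) = v ∧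
      IsUnionOfStrata {w | (A w).1 ^ 2 + ε * (A w).2 ^ 2 = 0} := by
  obtain hε | hε := le_or_gt 0 ε
  · obtain ⟨A, hA⟩ := exists_continuousLinearEquiv_apply_eq_smul_add_smul (v := v)
      (b := (-(ε * v.2), v.1)) (by convert hv using 1; ring)
    have hδ (w : ℝ × ℝ) : (A w).1 ^ 2 + ε * (A w).2 ^ 2 =
        (v.1 ^ 2 + ε * v.2 ^ 2) * (w.1 ^ 2 + ε * w.2 ^ 2) := by
      simp only [hA, Prod.smul_mk, smul_eq_mul, mul_neg, Prod.fst_add, Prod.smul_fst, Prod.snd_add,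
        Prod.smul_snd]
      ring
    refine ⟨A, by simp [hA], ?_⟩
    simpa only [hδ, mul_eq_zero, hv, false_or] using isUnionOfStrata_sq_add_mul_sq hε
  · obtain ⟨k, hk, rfl⟩ : ∃ k : ℝ, k ≠ 0 ∧ -k ^ 2 = ε :=
      ⟨√(-ε), (Real.sqrt_pos.2 (neg_pos.2 hε)).ne', by rw [Real.sq_sqrt (by linarith), neg_neg]⟩
    obtain ⟨A, hA⟩ := exists_continuousLinearEquiv_apply_eq_smul_add_smul (v := v)
      (b := ((v.1 + k * v.2) / 2) • (1, 1 / k)) (by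
        convert div_ne_zero hv (mul_ne_zero two_ne_zero hk) using 1
        simp only [Prod.smul_mk, smul_eq_mul]
        field_simp
        ring)
    have hδ (w : ℝ × ℝ) : (A w).1 ^ 2 + -k ^ 2 * (A w).2 ^ 2 =
        (v.1 ^ 2 + -k ^ 2 * v.2 ^ 2) * (w.1 * (w.1 + w.2)) := by
      simp only [hA, one_div, Prod.smul_mk, smul_eq_mul, mul_one, Prod.fst_add, Prod.smul_fst,
        Prod.snd_add, Prod.smul_snd, neg_mul]
      field_simp
      ring
    refine ⟨A, by simp [hA], ?_⟩
    simpa only [hδ, mul_eq_zero, hv, false_or] using isUnionOfStrata_mul_add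

theorem A1_case2_general {ε : ℝ} {P Q : ℝ × ℝ → ℝ} (hP : ContDiffAt ℝ 1 P (0, 0))
    (hQ : ContDiffAt ℝ 1 Q (0, 0)) (hδ : P (0, 0) ^ 2 + ε * Q (0, 0) ^ 2 ≠ 0) :
    OrbitallyEquivAt (fun z ↦ (P z, Q z)) (fun z ↦ z.1 ^ 2 + ε * z.2 ^ 2) (0, 0)
      (fun _ ↦ (P (0, 0), Q (0, 0))) (fun z ↦ z.1 ^ 2 + ε * z.2 ^ 2) (0, 0) := by
  obtain ⟨A, hA, hstrata⟩ :=
    exists_isUnionOfStrata_sq_add_mul_sq (v := (P (0, 0), Q (0, 0))) hδ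
  exact orbitallyEquivAt_const_of_isUnionOfStrata (hP.prodMk hQ) hA hstrata

/-- (`A₁`-type impasse curve, Case 2 of Table 2.)
If `δ(x,y) = x² + ε·y²` and `X = (P,Q)` is real-analytic near the origin with
`0 ≠ P(0,0) ≠ ±Q(0,0)`, then `(X, δ)` is orientation-preserving `C⁰`-orbitally equivalent at
the origin to the system with constant adjoint vector field `(P(0,0), Q(0,0))`. -/
theorem A1_case2 (ε : ℝ) (hε : ε = 1 ∨ ε = -1)
    (P Q : ℝ × ℝ → ℝ)
    (hP : AnalyticAt ℝ P (0, 0)) (hQ : AnalyticAt ℝ Q (0, 0))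
    (hP0 : P (0, 0) ≠ 0)
    (hPQ : P (0, 0) ≠ Q (0, 0)) (hPQ' : P (0, 0) ≠ -Q (0, 0)) :
    OrbitallyEquivAt (fun z => (P z, Q z)) (fun z => z.1 ^ 2 + ε * z.2 ^ 2) (0, 0)
      (fun _ => (P (0, 0), Q (0, 0))) (fun z => z.1 ^ 2 + ε * z.2 ^ 2) (0, 0) := by
  refine A1_case2_general hP.contDiffAt hQ.contDiffAt ?_
  rcases hε with rfl | rfl
  · positivity
  · have hfactor : P (0, 0) ^ 2 + -1 * Q (0, 0) ^ 2 =
        (P (0, 0) - Q (0, 0)) * (P (0, 0) + Q (0, 0)) := by ring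
    rw [hfactor]
    exact mul_ne_zero (sub_ne_zero.2 hPQ) (mt eq_neg_of_add_eq_zero_left hPQ')
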